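/- (Difference formula relating v-adic and ∞-adic multiple zeta star values at negative integers.) Let r ≥ 1 and m_1,…,m_r ∈ ℤ_{≥0}. Then in A: ζ_v⋆(−m_1,…,−m_r) − ζ_∞⋆(−m_1,…,−m_r) = Σ_{l=0}^{r} (−1)^l · ζ⋆_{<d}(−m_{l+1},…,−m_r) · [ Σ_{(a_1,…,a_l)} v^{a_1+⋯+a_l} · ζ_{<d}(−(m_1−a_1)) ⋯ ζ_{<d}(−(m_l−a_l)) · C(m_1,a_1) ⋯ C(m_l,a_l) · ζ_∞⋆(−a_1,…,−a_l) ], where the inner sum runs over all integer tuples (a_1,…,a_l) with 0 ≤ a_j ≤ m_j, (q−1) | (m_j − a_j) for all 1 ≤ j ≤ l, and a_j = m_j for at least one j (in particular the l = 0 summand is 0). -/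

import Mathlib

open Polynomial

/-- The power sum `S_i(-m)`: the sum of `n ^ m` over monic polynomials `n` of degree `i`. -/
noncomputable def powerSum (F : Type*) [Field F] [Fintype F] (i m : ℕ) : Polynomial F :=
  ∑ᶠ n ∈ {n : Polynomial F | n.Monic ∧ n.natDegree = i}, n ^ m

/-- The restricted power sum `S̃_i(-m)`: the sum of `n ^ m` over monic polynomials `n` of
degree `i` not divisible by `v`. -/
noncomputable def powerSumV (F : Type*) [Field F] [Fintype F] (v : Polynomial F) (i m : ℕ) :
    Polynomial F :=
  ∑ᶠ n ∈ {n : Polynomial F | n.Monic ∧ n.natDegree = i ∧ ¬ v ∣ n}, n ^ m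

/-- `ζ_∞(-m_1, …, -m_r)`, the ∞-adic multiple zeta value at nonpositive integers:
the sum over `i_1 > ⋯ > i_r ≥ 0` of `S_{i_1}(-m_1) ⋯ S_{i_r}(-m_r)`.
Only `m 0, …, m (r-1)` are used.  The depth-0 value is `1`. -/
noncomputable def zetaInf (F : Type*) [Field F] [Fintype F] (r : ℕ) (m : ℕ → ℕ) :
    Polynomial F :=
  ∑ᶠ i ∈ {i : Fin r → ℕ | StrictAnti i}, ∏ j : Fin r, powerSum F (i j) (m (j : ℕ))

/-- `ζ⋆_∞(-m_1, …, -m_r)`, the ∞-adic multiple zeta star value at nonpositive integers: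
the sum over `i_1 ≥ ⋯ ≥ i_r ≥ 0` of `S_{i_1}(-m_1) ⋯ S_{i_r}(-m_r)`. -/
noncomputable def zetaInfStar (F : Type*) [Field F] [Fintype F] (r : ℕ) (m : ℕ → ℕ) :
    Polynomial F :=
  ∑ᶠ i ∈ {i : Fin r → ℕ | Antitone i}, ∏ j : Fin r, powerSum F (i j) (m (j : ℕ))

/-- `ζ_v(-m_1, …, -m_r)`, the v-adic multiple zeta value at nonpositive integers. -/
noncomputable def zetaV (F : Type*) [Field F] [Fintype F] (v : Polynomial F) (r : ℕ)
    (m : ℕ → ℕ) : Polynomial F :=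
  ∑ᶠ i ∈ {i : Fin r → ℕ | StrictAnti i}, ∏ j : Fin r, powerSumV F v (i j) (m (j : ℕ))

/-- `ζ⋆_v(-m_1, …, -m_r)`, the v-adic multiple zeta star value at nonpositive integers. -/
noncomputable def zetaVStar (F : Type*) [Field F] [Fintype F] (v : Polynomial F) (r : ℕ)
    (m : ℕ → ℕ) : Polynomial F :=
  ∑ᶠ i ∈ {i : Fin r → ℕ | Antitone i}, ∏ j : Fin r, powerSumV F v (i j) (m (j : ℕ))

/-- `ζ_{<d}(-m_1, …, -m_r)`, the truncated multiple zeta value: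
the sum over `d > i_1 > ⋯ > i_r ≥ 0` of `S_{i_1}(-m_1) ⋯ S_{i_r}(-m_r)`. -/
noncomputable def zetaLt (F : Type*) [Field F] [Fintype F] (d r : ℕ) (m : ℕ → ℕ) :
    Polynomial F :=
  ∑ᶠ i ∈ {i : Fin r → ℕ | StrictAnti i ∧ ∀ j, i j < d},
    ∏ j : Fin r, powerSum F (i j) (m (j : ℕ))

/-- `ζ⋆_{<d}(-m_1, …, -m_r)`, the truncated multiple zeta star value. -/
noncomputable def zetaLtStar (F : Type*) [Field F] [Fintype F] (d r : ℕ) (m : ℕ → ℕ) :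
    Polynomial F :=
  ∑ᶠ i ∈ {i : Fin r → ℕ | Antitone i ∧ ∀ j, i j < d},
    ∏ j : Fin r, powerSum F (i j) (m (j : ℕ))

/-- `ζ_{<d}(-m)`, the depth-one truncated zeta value `Σ_{d > i ≥ 0} S_i(-m)`. -/
noncomputable def zetaLtOne (F : Type*) [Field F] [Fintype F] (d m : ℕ) : Polynomial F :=
  ∑ᶠ i ∈ {i : ℕ | i < d}, powerSum F i m

/-!
Let `d = deg v`. Division with remainder writes a monic `n` of degree `i + d` as `n = w + v k` with
`deg w < d` and `k` monic of degree `i`, and `v ∣ n` if and only if `w = 0`. Since the `b`-th powers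
of the nonzero `w` sum to `-ζ_{<d}(-b)` if `q - 1 ∣ b` and to `0` otherwise, the binomial theorem
expresses `S̃_{i+d}(-m)` through the `S_i(-a)` with `a ≤ m` and `q - 1 ∣ m - a`, with coefficients
independent of `i`. The multiples of `v` contribute `v ^ m S_i(-m)`, and this cancels exactly the
term `a = m`, so `S_{i+d}(-m)` has the same expansion without that term.

In both star sums, split off the indices `i_1 ≥ ⋯ ≥ i_l ≥ d`, shift them down by `d` and expand
multilinearly. The remaining indices give the common factor `ζ⋆_{<d}(-m_{l+1}, …, -m_r)`, and the
expansions differ precisely by the tuples with some `a_j = m_j`.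
-/

section StarSum

variable {R : Type*}

open Classical in
/-- The star sum `∑ f_1(i_1) ⋯ f_r(i_r)` over `N > i_1 ≥ ⋯ ≥ i_r ≥ 0`: the common shape of
`ζ⋆_{<N}` and, for `N` large, of `ζ⋆_∞` and `ζ⋆_v`. -/
noncomputable def starSum [CommSemiring R] (N : ℕ) {r : ℕ} (f : Fin r → ℕ → R) : R :=
  ∑ i ∈ Fintype.piFinset (fun _ : Fin r => Finset.range N) with Antitone i, ∏ j, f j (i j)

lemma antitone_fin_succ_iff {α : Type*} [Preorder α] {n : ℕ} {f : Fin (n + 1) → α} :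
    Antitone f ↔ (∀ j : Fin n, f j.succ ≤ f 0) ∧ Antitone (Fin.tail f) := by
  refine ⟨fun h => ⟨fun j => h (Fin.zero_le _), fun a b hab => h (Fin.succ_le_succ_iff.2 hab)⟩,
    fun ⟨h0, ht⟩ a b hab => ?_⟩
  cases b using Fin.cases with
  | zero => rw [Fin.le_zero_iff.1 hab]
  | succ b => cases a using Fin.cases with
    | zero => exact h0 b
    | succ a => exact ht (Fin.succ_le_succ_iff.1 hab)

section CommSemiring

variable [CommSemiring R]

lemma starSum_zero (N : ℕ) (f : Fin 0 → ℕ → R) : starSum N f = 1 := by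
  simp [starSum, Subsingleton.antitone]

lemma starSum_succ (N : ℕ) {r : ℕ} (f : Fin (r + 1) → ℕ → R) :
    starSum N f = ∑ k ∈ Finset.range N, f 0 k * starSum (k + 1) (Fin.tail f) := by
  classical
  simp only [starSum, Finset.mul_sum]
  rw [Finset.sum_sigma']
  refine Finset.sum_nbij' (fun i => ⟨i 0, Fin.tail i⟩) (fun p => Fin.cons p.1 p.2)
    ?_ ?_ (fun i _ => Fin.cons_self_tail i) (fun p _ => by simp)
    (fun i _ => Fin.prod_univ_succ _)
  · intro i hi
    simp only [Finset.mem_sigma, Finset.mem_range, Finset.mem_filter, Fintype.mem_piFinset,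
      Nat.lt_succ_iff, antitone_fin_succ_iff] at hi ⊢
    exact ⟨hi.1 0, hi.2⟩
  · rintro ⟨k, t⟩ hp
    simp only [Finset.mem_sigma, Finset.mem_range, Finset.mem_filter, Fintype.mem_piFinset,
      Nat.lt_succ_iff, Fin.forall_fin_succ, Fin.cons_zero, Fin.cons_succ, Fin.tail_cons,
      antitone_fin_succ_iff] at hp ⊢
    exact ⟨⟨hp.1, fun j => (hp.2.1 j).trans_lt hp.1⟩, hp.2⟩

lemma starSum_congr {N r : ℕ} {f g : Fin r → ℕ → R} (h : ∀ j, ∀ i < N, f j i = g j i) :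
    starSum N f = starSum N g := by
  refine Finset.sum_congr rfl fun i hi => Finset.prod_congr rfl fun j _ => h j _ ?_
  simpa using Fintype.mem_piFinset.1 (Finset.mem_filter.1 hi).1 j

/-- The summation index `l` is the number of the `i_j` that are at least `d`. -/
lemma starSum_add (N d r : ℕ) (f : ℕ → ℕ → R) :
    starSum (N + d) (fun j : Fin r => f j) =
      ∑ l ∈ Finset.range (r + 1), starSum N (fun (j : Fin l) i => f j (i + d)) *
        starSum d (fun j : Fin (r - l) => f (l + j)) := by
  induction r generalizing N f with
  | zero => simp [starSum_zero]
  | succ r ih =>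
    have head_ge (k : ℕ) : starSum (k + d + 1) (fun j : Fin r => f (j + 1)) =
        ∑ l ∈ Finset.range (r + 1), starSum (k + 1) (fun (j : Fin l) i => f (j + 1) (i + d)) *
          starSum d (fun j : Fin (r - l) => f (l + 1 + j)) := by
      simpa only [add_right_comm] using ih (k + 1) fun j => f (j + 1)
    rw [Finset.sum_range_succ', starSum_zero, one_mul, starSum_succ, add_comm N d,
      Finset.sum_range_add, add_comm]
    congr 1
    · simp only [starSum_succ, Finset.sum_mul]
      rw [Finset.sum_comm]
      refine Finset.sum_congr rfl fun k _ => ?_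
      simp only [Fin.tail_def, Fin.val_succ, Fin.val_zero, add_comm d k, head_ge, Finset.mul_sum]
      refine Finset.sum_congr rfl fun l _ => ?_
      rw [mul_assoc, Nat.add_sub_add_right]
    · simp [starSum_succ, Fin.tail_def]

lemma starSum_const_mul (N : ℕ) {r : ℕ} (c : Fin r → R) (f : Fin r → ℕ → R) :
    starSum N (fun j i => c j * f j i) = (∏ j, c j) * starSum N f := by
  simp only [starSum, Finset.prod_mul_distrib, Finset.mul_sum]

lemma starSum_sum {ι : Type*} (N : ℕ) {r : ℕ} (T : Fin r → Finset ι) (f : Fin r → ι → ℕ → R) :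
    starSum N (fun j i => ∑ a ∈ T j, f j a i) =
      ∑ a ∈ Fintype.piFinset T, starSum N (fun j => f j (a j)) := by
  simp only [starSum, Finset.prod_univ_sum]
  exact Finset.sum_comm

lemma starSum_add_of_add_eq_sum {ι : Type*} {d : ℕ} {f : ℕ → ℕ → R} {T : ℕ → Finset ι}
    {c : ℕ → ι → R} {g : ι → ℕ → R} (hf : ∀ j i, f j (i + d) = ∑ a ∈ T j, c j a * g a i)
    (N r : ℕ) :
    starSum (N + d) (fun j : Fin r => f j) =
      ∑ l ∈ Finset.range (r + 1),
        (∑ a ∈ Fintype.piFinset fun j : Fin l => T j,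
          (∏ j : Fin l, c j (a j)) * starSum N fun j => g (a j)) *
        starSum d (fun j : Fin (r - l) => f (l + j)) := by
  rw [starSum_add]
  simp only [hf, starSum_sum, starSum_const_mul]

end CommSemiring

lemma sum_piFinset_sub_sum_piFinset_erase {κ ι M : Type*} [Fintype κ] [DecidableEq κ]
    [DecidableEq ι] [AddCommGroup M] (T : κ → Finset ι) (p : κ → ι)
    [DecidablePred fun a : κ → ι => ∃ j, a j = p j] (f : (κ → ι) → M) :
    ∑ a ∈ Fintype.piFinset T, f a - ∑ a ∈ Fintype.piFinset fun j => (T j).erase (p j), f a =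
      ∑ a ∈ Fintype.piFinset T with ∃ j, a j = p j, f a := by
  classical
  have avoiding : (Fintype.piFinset fun j => (T j).erase (p j)) =
      Fintype.piFinset T \ {a ∈ Fintype.piFinset T | ∃ j, a j = p j} := by
    ext a
    simp only [Fintype.mem_piFinset, Finset.mem_erase, Finset.mem_sdiff, Finset.mem_filter,
      forall_and, not_and, not_exists]
    tauto
  rw [avoiding, Finset.sum_sdiff_eq_sub (Finset.filter_subset _ _), sub_sub_cancel]

lemma starSum_sub_starSum [CommRing R] {ι : Type*} [DecidableEq ι] {d : ℕ} {f f' : ℕ → ℕ → R}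
    {T : ℕ → Finset ι} {p : ℕ → ι} {c : ℕ → ι → R} {g : ι → ℕ → R}
    (hlt : ∀ j, ∀ i < d, f' j i = f j i)
    (hf' : ∀ j i, f' j (i + d) = ∑ a ∈ T j, c j a * g a i)
    (hf : ∀ j i, f j (i + d) = ∑ a ∈ (T j).erase (p j), c j a * g a i) (N r : ℕ) :
    starSum (N + d) (fun j : Fin r => f' j) - starSum (N + d) (fun j : Fin r => f j) =
      ∑ l ∈ Finset.range (r + 1),
        (∑ a ∈ Fintype.piFinset (fun j : Fin l => T j) with ∃ j : Fin l, a j = p j,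
          (∏ j : Fin l, c j (a j)) * starSum N fun j => g (a j)) *
        starSum d (fun j : Fin (r - l) => f (l + j)) := by
  rw [starSum_add_of_add_eq_sum hf', starSum_add_of_add_eq_sum hf, ← Finset.sum_sub_distrib]
  refine Finset.sum_congr rfl fun l _ => ?_
  rw [starSum_congr fun j => hlt (l + j), ← sub_mul, sum_piFinset_sub_sum_piFinset_erase]

lemma finsum_antitone_eq_starSum [CommSemiring R] {N r : ℕ} {f : Fin r → ℕ → R}
    (h : ∀ j, ∀ i ≥ N, f j i = 0) :
    ∑ᶠ i ∈ {i : Fin r → ℕ | Antitone i}, ∏ j, f j (i j) = starSum N f := by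
  refine finsum_mem_eq_sum_of_inter_support_eq _ (Set.ext fun i => ?_)
  simp only [Set.mem_inter_iff, Set.mem_ofPred_eq, Function.mem_support, Finset.coe_filter,
    Fintype.mem_piFinset, Finset.mem_range]
  refine ⟨fun ⟨hi, hne⟩ => ⟨⟨fun j => ?_, hi⟩, hne⟩, fun ⟨hi, hne⟩ => ⟨hi.2, hne⟩⟩
  exact not_le.1 fun hj => hne (Finset.prod_eq_zero (Finset.mem_univ j) (h j _ hj))

lemma finsum_antitone_lt_eq_starSum [CommSemiring R] (N : ℕ) {r : ℕ} (f : Fin r → ℕ → R) :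
    ∑ᶠ i ∈ {i : Fin r → ℕ | Antitone i ∧ ∀ j, i j < N}, ∏ j, f j (i j) = starSum N f := by
  rw [starSum, ← finsum_mem_coe_finset]
  simp [and_comm]

end StarSum

lemma finsum_mem_restrict_mem {α M : Type*} [Zero α] [AddCommMonoid M] {l : ℕ}
    (s : Finset (Fin l → α)) (f : (Fin l → α) → M) :
    ∑ᶠ a ∈ {a : ℕ → α | (fun j : Fin l => a j) ∈ s ∧ ∀ j, l ≤ j → a j = 0},
      f (fun j : Fin l => a j) = ∑ a ∈ s, f a := by
  rw [← finsum_mem_coe_finset]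
  refine finsum_mem_eq_of_bijOn (fun a (j : Fin l) => a j)
    ⟨fun a ha => ha.1, fun a ha b hb hab => funext fun j => ?_, fun b hb => ?_⟩ fun a _ => rfl
  · obtain hj | hj := lt_or_ge j l
    · exact congrFun hab ⟨j, hj⟩
    · rw [ha.2 j hj, hb.2 j hj]
  · refine ⟨fun k => if hk : k < l then b ⟨k, hk⟩ else 0, ⟨by simpa using hb, fun k hk => ?_⟩, ?_⟩
    · simp [hk.not_gt]
    · simp

section Polynomial

open Classical in
/-- The polynomials of degree less than `d`, including `0`. -/
noncomputable def polysDegreeLT (R : Type*) [Ring R] [Finite R] (d : ℕ) : Finset R[X] :=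
  have : Finite (degreeLT R d) := .of_equiv _ (degreeLTEquiv R d).toEquiv.symm
  (Set.toFinite (degreeLT R d : Set R[X])).toFinset

open Classical in
/-- The monic polynomials of degree `i`, the index set of the power sum `S_i`. -/
noncomputable def monicsOfDegree (R : Type*) [Ring R] [Finite R] (i : ℕ) : Finset R[X] :=
  {n ∈ polysDegreeLT R (i + 1) | IsMonicOfDegree n i}

lemma isMonicOfDegree_add_of_degree_lt {R : Type*} [Semiring R] {p q : R[X]} {n : ℕ}
    (hp : p.degree < n) (hq : IsMonicOfDegree q n) : IsMonicOfDegree (p + q) n := by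
  obtain rfl | hp0 := eq_or_ne p 0
  · rwa [zero_add]
  · exact .add_left ((natDegree_lt_iff_degree_lt hp0).2 hp) hq

section Ring

variable {R : Type*} [Ring R] [Finite R]

lemma mem_polysDegreeLT {d : ℕ} {w : R[X]} : w ∈ polysDegreeLT R d ↔ w.degree < d := by
  simp [polysDegreeLT, mem_degreeLT]

lemma zero_mem_polysDegreeLT (d : ℕ) : 0 ∈ polysDegreeLT R d := by
  simp [mem_polysDegreeLT, bot_lt_iff_ne_bot]

lemma card_polysDegreeLT (d : ℕ) : (polysDegreeLT R d).card = Nat.card R ^ d := by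
  have coe_eq : (polysDegreeLT R d : Set R[X]) = degreeLT R d := by simp [polysDegreeLT]
  rw [← Set.ncard_coe_finset, coe_eq, ← Nat.card_coe_set_eq]
  exact (Nat.card_congr (degreeLTEquiv R d).toEquiv).trans (by rw [Nat.card_fun, Nat.card_fin])

lemma mem_monicsOfDegree {i : ℕ} {n : R[X]} : n ∈ monicsOfDegree R i ↔ IsMonicOfDegree n i := by
  simp only [monicsOfDegree, Finset.mem_filter, mem_polysDegreeLT, and_iff_right_iff_imp]
  rintro ⟨rfl, -⟩
  exact degree_le_natDegree.trans_lt (by exact_mod_cast Nat.lt_succ_self _)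

end Ring

section CommRing

variable {R : Type*} [CommRing R] [Nontrivial R]

lemma isMonicOfDegree_divByMonic {n v : R[X]} {i : ℕ} (hv : v.Monic)
    (hn : IsMonicOfDegree n (i + v.natDegree)) : IsMonicOfDegree (n /ₘ v) i := by
  refine ⟨by rw [natDegree_divByMonic _ hv, hn.natDegree_eq, Nat.add_sub_cancel], ?_⟩
  rw [Monic, leadingCoeff_divByMonic_of_monic hv, hn.leadingCoeff_eq]
  rw [degree_eq_natDegree hn.ne_zero, degree_eq_natDegree hv.ne_zero, hn.natDegree_eq]
  exact_mod_cast Nat.le_add_left _ _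

variable [Finite R] {M : Type*} [AddCommMonoid M] {v : R[X]}

lemma sum_monicsOfDegree_add (hv : v.Monic) (i : ℕ) (g : R[X] → M) :
    ∑ n ∈ monicsOfDegree R (i + v.natDegree), g n =
      ∑ k ∈ monicsOfDegree R i, ∑ w ∈ polysDegreeLT R v.natDegree, g (w + v * k) := by
  have mem_iff {w : R[X]} : w ∈ polysDegreeLT R v.natDegree ↔ w.degree < v.degree := by
    rw [mem_polysDegreeLT, degree_eq_natDegree hv.ne_zero]
  rw [← Finset.sum_product']
  refine Finset.sum_bij' (fun n _ => (n /ₘ v, n %ₘ v)) (fun p _ => p.2 + v * p.1)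
    (fun n hn => ?_) (fun p hp => ?_) (fun n _ => modByMonic_add_div n v) (fun p hp => ?_)
    (fun n _ => by rw [modByMonic_add_div n v])
  · rw [Finset.mem_product, mem_iff, mem_monicsOfDegree]
    exact ⟨isMonicOfDegree_divByMonic hv (mem_monicsOfDegree.1 hn), degree_modByMonic_lt n hv⟩
  · obtain ⟨hk, hw⟩ := Finset.mem_product.1 hp
    have hvk : IsMonicOfDegree (v * p.1) (i + v.natDegree) :=
      add_comm i _ ▸ .mul ⟨rfl, hv⟩ (mem_monicsOfDegree.1 hk)
    refine mem_monicsOfDegree.2 (isMonicOfDegree_add_of_degree_lt ?_ hvk)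
    exact (mem_polysDegreeLT.1 hw).trans_le (by exact_mod_cast Nat.le_add_left _ _)
  · have hw := mem_iff.1 (Finset.mem_product.1 hp).2
    exact Prod.ext_iff.2 (div_modByMonic_unique p.1 p.2 hv ⟨rfl, hw⟩)

open Classical in
lemma sum_monicsOfDegree_not_dvd_add (hv : v.Monic) (i : ℕ) (g : R[X] → M) :
    ∑ n ∈ monicsOfDegree R (i + v.natDegree) with ¬v ∣ n, g n =
      ∑ k ∈ monicsOfDegree R i, ∑ w ∈ (polysDegreeLT R v.natDegree).erase 0, g (w + v * k) := by
  rw [Finset.sum_filter, sum_monicsOfDegree_add hv]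
  refine Finset.sum_congr rfl fun k _ => ?_
  rw [← Finset.filter_ne' _ 0, Finset.sum_filter]
  refine Finset.sum_congr rfl fun w hw => if_congr (not_congr ?_) rfl rfl
  rw [dvd_add_left (dvd_mul_right v k)]
  refine ⟨fun hdvd => by_contra fun hw0 => hv.not_dvd_of_degree_lt hw0 ?_ hdvd,
    fun hw0 => hw0 ▸ dvd_zero v⟩
  rwa [degree_eq_natDegree hv.ne_zero, ← mem_polysDegreeLT]

end CommRing

open Classical in
lemma sum_polysDegreeLT_erase_zero {F M : Type*} [Field F] [Fintype F] [AddCommMonoid M] (d : ℕ)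
    (g : F[X] → M) :
    ∑ w ∈ (polysDegreeLT F d).erase 0, g w =
      ∑ n ∈ polysDegreeLT F d with n.Monic, ∑ c : Fˣ, g (C (c : F) * n) := by
  rw [← Finset.sum_product']
  symm
  refine Finset.sum_bij (fun p _ => C (p.2 : F) * p.1) (fun p hp => ?_)
    (fun p hp p' hp' h => ?_) (fun w hw => ?_) (fun p _ => rfl)
  · simp only [Finset.mem_product, Finset.mem_filter, mem_polysDegreeLT] at hp
    simp [mem_polysDegreeLT, hp.1.1, hp.1.2.ne_zero]
  · simp only [Finset.mem_product, Finset.mem_filter] at hp hp'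
    have hc : p.2 = p'.2 := Units.ext <| by
      simpa [hp.1.2.leadingCoeff, hp'.1.2.leadingCoeff] using congrArg leadingCoeff h
    exact Prod.ext (mul_left_cancel₀ (by simp) (hc ▸ h)) hc
  · obtain ⟨hw0, hw⟩ := Finset.mem_erase.1 hw
    have hlc : w.leadingCoeff ≠ 0 := leadingCoeff_ne_zero.2 hw0
    refine ⟨(C w.leadingCoeff⁻¹ * w, Units.mk0 _ hlc), ?_, ?_⟩
    · simpa [mem_polysDegreeLT, degree_C_mul, hlc, Monic.def] using mem_polysDegreeLT.1 hw
    · simp [← mul_assoc, ← C_mul, hlc]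

lemma sum_sum_add_mul_pow {R : Type*} [CommSemiring R] (K W : Finset R) (v : R) (m : ℕ) :
    ∑ k ∈ K, ∑ w ∈ W, (w + v * k) ^ m =
      ∑ a ∈ Finset.range (m + 1),
        v ^ a * (∑ w ∈ W, w ^ (m - a)) * m.choose a * ∑ k ∈ K, k ^ a := by
  simp only [add_comm _ (v * _), add_pow, mul_pow, Finset.mul_sum, Finset.sum_mul]
  refine (Finset.sum_congr rfl fun k _ => Finset.sum_comm).trans ?_
  rw [Finset.sum_comm]
  refine Finset.sum_congr rfl fun a _ => Finset.sum_congr rfl fun k _ =>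
    Finset.sum_congr rfl fun w _ => by ring

end Polynomial

section PowerSum

variable {F : Type*} [Field F] [Fintype F]

lemma powerSum_eq_sum (i m : ℕ) : powerSum F i m = ∑ n ∈ monicsOfDegree F i, n ^ m := by
  rw [powerSum, ← finsum_mem_coe_finset]
  simp [mem_monicsOfDegree, isMonicOfDegree_iff', and_comm]

open Classical in
lemma powerSumV_eq_sum (v : F[X]) (i m : ℕ) :
    powerSumV F v i m = ∑ n ∈ monicsOfDegree F i with ¬v ∣ n, n ^ m := by
  rw [powerSumV, ← finsum_mem_coe_finset]
  simp [mem_monicsOfDegree, isMonicOfDegree_iff', and_assoc, and_left_comm]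

open Classical in
lemma zetaLtOne_eq_sum (d m : ℕ) :
    zetaLtOne F d m = ∑ n ∈ polysDegreeLT F d with n.Monic, n ^ m := by
  have natDegree_lt : ∀ n ∈ {n ∈ polysDegreeLT F d | n.Monic}, n.natDegree ∈ Finset.range d := by
    intro n hn
    rw [Finset.mem_filter, mem_polysDegreeLT] at hn
    exact Finset.mem_range.2 ((natDegree_lt_iff_degree_lt hn.2.ne_zero).2 hn.1)
  have fiber {i : ℕ} (hi : i < d) :
      {n ∈ {n ∈ polysDegreeLT F d | n.Monic} | n.natDegree = i} = monicsOfDegree F i := by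
    ext n
    rw [mem_monicsOfDegree, isMonicOfDegree_iff', Finset.mem_filter, Finset.mem_filter,
      mem_polysDegreeLT]
    refine ⟨fun h => ⟨h.2, h.1.2⟩, fun h => ⟨⟨?_, h.2⟩, h.1⟩⟩
    exact (natDegree_lt_iff_degree_lt h.2.ne_zero).1 (h.1 ▸ hi)
  have range_eq : {i : ℕ | i < d} = Finset.range d := by ext; simp
  rw [zetaLtOne, ← Finset.sum_fiberwise_of_maps_to natDegree_lt, range_eq, finsum_mem_coe_finset]
  exact Finset.sum_congr rfl fun i hi => by rw [powerSum_eq_sum, fiber (Finset.mem_range.1 hi)]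

open Classical in
lemma sum_polysDegreeLT_erase_zero_pow (d b : ℕ) :
    ∑ w ∈ (polysDegreeLT F d).erase 0, w ^ b =
      if Fintype.card F - 1 ∣ b then -zetaLtOne F d b else 0 := by
  have sum_units : ∑ c : Fˣ, C (c : F) ^ b = if Fintype.card F - 1 ∣ b then -1 else 0 := by
    simp only [← C_pow, ← map_sum, FiniteField.sum_pow_units]
    split_ifs <;> simp
  simp only [sum_polysDegreeLT_erase_zero, mul_pow, ← Finset.sum_mul, sum_units, ← Finset.mul_sum,
    ← zetaLtOne_eq_sum]
  split_ifs <;> simp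

lemma zetaLtOne_zero {d : ℕ} (hd : 0 < d) : zetaLtOne F d 0 = 1 := by
  classical
  have sum_nonzero : ∑ w ∈ (polysDegreeLT F d).erase 0, w ^ 0 = -zetaLtOne F d 0 := by
    rw [sum_polysDegreeLT_erase_zero_pow, if_pos (dvd_zero _)]
  have sum_all : ∑ w ∈ polysDegreeLT F d, w ^ 0 = 0 := by
    have hq : (Fintype.card F : F[X]) = 0 := by
      rw [← map_natCast C, FiniteField.cast_card_eq_zero, map_zero]
    simp [card_polysDegreeLT, hq, hd.ne']
  rw [← Finset.add_sum_erase _ _ (zero_mem_polysDegreeLT d), sum_nonzero, pow_zero] at sum_all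
  exact (add_neg_eq_zero.1 sum_all).symm

/-- The exponents `a ≤ m` with `q - 1 ∣ m - a`: those for which `S_i(-a)` occurs in the expansion
of `S̃_{i + d}(-m)`. -/
def reductionExponents (q m : ℕ) : Finset ℕ := {a ∈ Finset.range (m + 1) | q - 1 ∣ m - a}

lemma mem_reductionExponents {q m a : ℕ} :
    a ∈ reductionExponents q m ↔ a ≤ m ∧ q - 1 ∣ m - a := by
  simp [reductionExponents]

/-- The coefficient of `S_i(-a)` in the expansion of `S̃_{i + d}(-m)`, where `d = v.natDegree`. -/
noncomputable def reductionCoeff (v : F[X]) (m a : ℕ) : F[X] :=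
  -(v ^ a * (zetaLtOne F v.natDegree (m - a) * (m.choose a : F[X])))

lemma reductionCoeff_self {v : F[X]} (hd : 0 < v.natDegree) (m : ℕ) :
    reductionCoeff v m m = -v ^ m := by
  simp [reductionCoeff, zetaLtOne_zero hd]

lemma powerSumV_add {v : F[X]} (hv : v.Monic) (i m : ℕ) :
    powerSumV F v (i + v.natDegree) m =
      ∑ a ∈ reductionExponents (Fintype.card F) m, reductionCoeff v m a * powerSum F i a := by
  classical
  rw [powerSumV_eq_sum, sum_monicsOfDegree_not_dvd_add hv, sum_sum_add_mul_pow, reductionExponents,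
    Finset.sum_filter]
  refine Finset.sum_congr rfl fun a _ => ?_
  rw [sum_polysDegreeLT_erase_zero_pow, ← powerSum_eq_sum, reductionCoeff]
  split_ifs <;> ring

lemma powerSum_add_eq_powerSumV_add {v : F[X]} (hv : v.Monic) (i m : ℕ) :
    powerSum F (i + v.natDegree) m =
      powerSumV F v (i + v.natDegree) m + v ^ m * powerSum F i m := by
  classical
  rw [powerSum_eq_sum, powerSumV_eq_sum, powerSum_eq_sum, sum_monicsOfDegree_add hv,
    sum_monicsOfDegree_not_dvd_add hv, Finset.mul_sum, ← Finset.sum_add_distrib]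
  refine Finset.sum_congr rfl fun k _ => ?_
  rw [← Finset.sum_erase_add _ _ (zero_mem_polysDegreeLT _), zero_add, mul_pow]

lemma powerSum_add {v : F[X]} (hv : v.Monic) (hd : 0 < v.natDegree) (i m : ℕ) :
    powerSum F (i + v.natDegree) m =
      ∑ a ∈ (reductionExponents (Fintype.card F) m).erase m,
        reductionCoeff v m a * powerSum F i a := by
  have hm : m ∈ reductionExponents (Fintype.card F) m := by simp [mem_reductionExponents]
  rw [powerSum_add_eq_powerSumV_add hv, powerSumV_add hv, ← Finset.sum_erase_add _ _ hm,
    reductionCoeff_self hd]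
  ring

/-- Reduction modulo `v = X` lowers the degree by one and strictly lowers the exponent. -/
lemma powerSum_eq_zero {i m : ℕ} (h : m < i) : powerSum F i m = 0 := by
  induction m using Nat.strong_induction_on generalizing i with
  | _ m ih =>
    obtain ⟨i, rfl⟩ : ∃ k, i = k + (X : F[X]).natDegree := ⟨i - 1, by rw [natDegree_X]; omega⟩
    rw [powerSum_add monic_X (by simp)]
    refine Finset.sum_eq_zero fun a ha => ?_
    rw [Finset.mem_erase, mem_reductionExponents] at ha
    rw [natDegree_X] at h
    rw [ih a (by omega) (by omega), mul_zero]

lemma powerSumV_eq_zero {v : F[X]} (hv : v.Monic) {i m : ℕ} (h : m + v.natDegree < i) :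
    powerSumV F v i m = 0 := by
  obtain ⟨i, rfl⟩ : ∃ k, i = k + v.natDegree := ⟨i - v.natDegree, by omega⟩
  rw [powerSumV_add hv]
  refine Finset.sum_eq_zero fun a ha => ?_
  rw [powerSum_eq_zero (by have := (mem_reductionExponents.1 ha).1; omega), mul_zero]

lemma powerSumV_of_lt_natDegree {v : F[X]} {i : ℕ} (hi : i < v.natDegree) (m : ℕ) :
    powerSumV F v i m = powerSum F i m := by
  classical
  rw [powerSumV_eq_sum, powerSum_eq_sum, Finset.filter_true_of_mem]
  rintro n hn hdvd
  obtain ⟨rfl, hmonic⟩ := mem_monicsOfDegree.1 hn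
  exact (natDegree_le_of_dvd hdvd hmonic.ne_zero).not_gt hi

end PowerSum

section Zeta

variable {F : Type*} [Field F] [Fintype F]

lemma zetaInfStar_eq_starSum {N r : ℕ} {m : ℕ → ℕ} (h : ∀ j < r, m j < N) :
    zetaInfStar F r m = starSum N fun (j : Fin r) i => powerSum F i (m j) :=
  finsum_antitone_eq_starSum (f := fun (j : Fin r) i => powerSum F i (m j))
    fun j _ hi => powerSum_eq_zero ((h j j.isLt).trans_le hi)

lemma zetaVStar_eq_starSum {v : F[X]} (hv : v.Monic) {N r : ℕ} {m : ℕ → ℕ}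
    (h : ∀ j < r, m j < N) :
    zetaVStar F v r m =
      starSum (N + v.natDegree) fun (j : Fin r) i => powerSumV F v i (m j) :=
  finsum_antitone_eq_starSum (f := fun (j : Fin r) i => powerSumV F v i (m j))
    fun j _ hi => powerSumV_eq_zero hv (by have := h j j.isLt; omega)

lemma zetaLtStar_eq_starSum (d r : ℕ) (m : ℕ → ℕ) :
    zetaLtStar F d r m = starSum d fun (j : Fin r) i => powerSum F i (m j) :=
  finsum_antitone_lt_eq_starSum d fun (j : Fin r) i => powerSum F i (m j)

lemma prod_reductionCoeff (v : F[X]) {l : ℕ} (m a : Fin l → ℕ) :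
    ∏ j, reductionCoeff v (m j) (a j) =
      (-1) ^ l * (v ^ (∑ j, a j) *
        ∏ j, zetaLtOne F v.natDegree (m j - a j) * ((m j).choose (a j) : F[X])) := by
  simp only [reductionCoeff, Finset.prod_neg, Finset.prod_mul_distrib, Finset.prod_pow_eq_pow_sum,
    Finset.card_univ, Fintype.card_fin]

lemma neg_one_pow_mul_finsum_eq_sum_piFinset {v : F[X]} {N l : ℕ} {m : ℕ → ℕ}
    (h : ∀ j < l, m j < N) :
    (-1) ^ l * ∑ᶠ a ∈ {a : ℕ → ℕ |
        (∀ j < l, a j ≤ m j ∧ (Fintype.card F - 1) ∣ (m j - a j)) ∧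
          (∃ j < l, a j = m j) ∧ ∀ j, l ≤ j → a j = 0},
      v ^ (∑ j ∈ Finset.range l, a j) *
        (∏ j ∈ Finset.range l,
          zetaLtOne F v.natDegree (m j - a j) * (Nat.choose (m j) (a j) : F[X])) *
        zetaInfStar F l a =
    ∑ a ∈ Fintype.piFinset fun j : Fin l => reductionExponents (Fintype.card F) (m j) with
        ∃ j : Fin l, a j = m j,
      (∏ j : Fin l, reductionCoeff v (m j) (a j)) *
        starSum N fun j i => powerSum F i (a j) := by
  have tuples : {a : ℕ → ℕ | (∀ j < l, a j ≤ m j ∧ (Fintype.card F - 1) ∣ (m j - a j)) ∧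
      (∃ j < l, a j = m j) ∧ ∀ j, l ≤ j → a j = 0} =
      {a : ℕ → ℕ | (fun j : Fin l => a j) ∈
        {a ∈ Fintype.piFinset fun j : Fin l => reductionExponents (Fintype.card F) (m j) |
          ∃ j : Fin l, a j = m j} ∧ ∀ j, l ≤ j → a j = 0} := by
    ext a
    simp [mem_reductionExponents, Fin.forall_iff, Fin.exists_iff, and_assoc]
  simp only [prod_reductionCoeff, mul_assoc, ← Finset.mul_sum]
  rw [← finsum_mem_restrict_mem, ← tuples]
  congr 1
  refine finsum_mem_congr rfl fun a ha => ?_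
  rw [zetaInfStar_eq_starSum fun j hj => (ha.1 j hj).1.trans_lt (h j hj)]
  simp only [Finset.prod_range, Finset.sum_range]

theorem zetaVStar_sub_zetaInfStar_general (F : Type*) [Field F] [Fintype F] (v : Polynomial F)
    (hv : v.Monic) (hd : 0 < v.natDegree) (r : ℕ) (m : ℕ → ℕ) :
    zetaVStar F v r m - zetaInfStar F r m =
      ∑ l ∈ Finset.range (r + 1),
        (-1 : Polynomial F) ^ l * zetaLtStar F v.natDegree (r - l) (fun j => m (l + j)) *
          ∑ᶠ a ∈ {a : ℕ → ℕ |
              (∀ j < l, a j ≤ m j ∧ (Fintype.card F - 1) ∣ (m j - a j)) ∧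
                (∃ j < l, a j = m j) ∧ ∀ j, l ≤ j → a j = 0},
            v ^ (∑ j ∈ Finset.range l, a j) *
              (∏ j ∈ Finset.range l,
                zetaLtOne F v.natDegree (m j - a j) * (Nat.choose (m j) (a j) : Polynomial F)) *
              zetaInfStar F l a := by
  obtain ⟨N, hN⟩ : ∃ N, ∀ j < r, m j < N :=
    ⟨(Finset.range r).sup m + 1, fun j hj =>
      Nat.lt_succ_of_le (Finset.le_sup (Finset.mem_range.2 hj))⟩
  have hNd : ∀ j < r, m j < N + v.natDegree := fun j hj => (hN j hj).trans_le (Nat.le_add_right ..)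
  rw [zetaVStar_eq_starSum hv hN, zetaInfStar_eq_starSum hNd,
    starSum_sub_starSum (fun j i hi => powerSumV_of_lt_natDegree hi (m j))
      (fun j i => powerSumV_add hv i (m j)) (fun j i => powerSum_add hv hd i (m j))]
  refine Finset.sum_congr rfl fun l hl => ?_
  have hNl : ∀ j < l, m j < N := fun j hj => hN j (hj.trans_le (Finset.mem_range_succ_iff.1 hl))
  rw [mul_right_comm, neg_one_pow_mul_finsum_eq_sum_piFinset hNl, zetaLtStar_eq_starSum]

end Zeta

/-- Difference formula relating v-adic and ∞-adic multiple zeta star values at negative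
integers.  The inner sum runs over tuples `(a_1, …, a_l)` (encoded as functions
`a : ℕ → ℕ` vanishing from index `l` on) with `0 ≤ a_j ≤ m_j`, `(q-1) ∣ (m_j - a_j)`,
and `a_j = m_j` for at least one `j`; in particular the `l = 0` summand is `0`. -/
theorem zetaVStar_sub_zetaInfStar (F : Type*) [Field F] [Fintype F] (v : Polynomial F)
    (hv : v.Monic) (hvirr : Irreducible v) (hd : 0 < v.natDegree) (r : ℕ) (hr : 1 ≤ r)
    (m : ℕ → ℕ) :
    zetaVStar F v r m - zetaInfStar F r m =
      ∑ l ∈ Finset.range (r + 1),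
        (-1 : Polynomial F) ^ l * zetaLtStar F v.natDegree (r - l) (fun j => m (l + j)) *
          ∑ᶠ a ∈ {a : ℕ → ℕ |
              (∀ j < l, a j ≤ m j ∧ (Fintype.card F - 1) ∣ (m j - a j)) ∧
                (∃ j < l, a j = m j) ∧ ∀ j, l ≤ j → a j = 0},
            v ^ (∑ j ∈ Finset.range l, a j) *
              (∏ j ∈ Finset.range l,
                zetaLtOne F v.natDegree (m j - a j) * (Nat.choose (m j) (a j) : Polynomial F)) *
              zetaInfStar F l a := by
  exact zetaVStar_sub_zetaInfStar_general F v hv hd r m
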